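/- arXiv:0803.2428 — 3 statements merged into one kernel-verified Lean document; each statement's English description precedes it below -/
import Mathlib

section
/- Let f be a homeomorphism of 𝕋^d homotopic to the identity with lift F, and let K ⊆ 𝕋^d be a minimal set of f. Suppose there exist an integer vector v ∈ ℤ^d \ {0} with gcd(v₁,…,v_d) = 1 and an irrational number ρ₀ ∈ ℝ \ ℚ such that the rotation set ρ_K(F) is contained in the affine hyperplane (ρ₀/‖v‖²)·v + {v}^⊥, and that f has bounded mean motion parallel to v on K. Then f restricted to K is semi-conjugate to the one-dimensional irrational rotation r_{ρ₀} : 𝕋¹ → 𝕋¹, x ↦ x + ρ₀ mod 1, and the semi-conjugacy is regular with respect to some 1×d integer matrix B: there is a continuous surjection h : K → 𝕋¹ with h∘f = r_{ρ₀}∘h on K admitting a lift H : π⁻¹(K) → ℝ with H∘F = H + ρ₀ and sup_{z ∈ π⁻¹(K)} |H(z) − Bz| < ∞. -/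
open Filter Topology

local notation "⟪" x ", " y "⟫" => @inner ℝ _ _ x y

noncomputable section

/-- Euclidean space `ℝ^d`. -/
abbrev Rd (d : ℕ) := EuclideanSpace ℝ (Fin d)

/-- The `d`-torus `𝕋^d = ℝ^d/ℤ^d`, realized as a product of circles. -/
abbrev Torus (d : ℕ) := Fin d → AddCircle (1 : ℝ)

/-- The quotient map `π : ℝ^d → 𝕋^d`. -/
def projT {d : ℕ} (z : Rd d) : Torus d := fun i => (z i : AddCircle (1 : ℝ))

/-- An integer vector viewed as an element of `ℝ^d`. -/
def intVec {d : ℕ} (m : Fin d → ℤ) : Rd d := WithLp.toLp 2 (fun i => (m i : ℝ))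

/-- A real vector viewed as an element of `ℝ^k`. -/
def vecR {k : ℕ} (ρ : Fin k → ℝ) : Rd k := WithLp.toLp 2 (fun i => ρ i)

/-- `F : ℝ^d → ℝ^d` is a lift of `f : 𝕋^d → 𝕋^d`:  `π ∘ F = f ∘ π` and
`F (z + m) = F z + m` for every integer vector `m`.  The existence of such a lift
expresses that `f` is homotopic to the identity. -/
def IsLift {d : ℕ} (f : Torus d ≃ₜ Torus d) (F : Rd d ≃ₜ Rd d) : Prop :=
  (∀ z : Rd d, projT (F z) = f (projT z)) ∧
  ∀ (z : Rd d) (m : Fin d → ℤ), F (z + intVec m) = F z + intVec m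

/-- The `n`-th iterate (`n ∈ ℤ`) of a homeomorphism. -/
def iterZ {X : Type*} [TopologicalSpace X] (F : X ≃ₜ X) (n : ℤ) : X → X := ⇑(F.toEquiv ^ n)

/-- `K` is a minimal set of `f`: nonempty, compact, invariant, and every orbit in `K`
is dense in `K`. -/
def IsMinimalSet {d : ℕ} (f : Torus d ≃ₜ Torus d) (K : Set (Torus d)) : Prop :=
  K.Nonempty ∧ IsCompact K ∧ f '' K = K ∧
  ∀ x ∈ K, K ⊆ closure (Set.range fun n : ℕ => (⇑f)^[n] x)

/-- The rotation set of `F` on `K`:  all limits `(F^{nᵢ} xᵢ − xᵢ)/nᵢ → ρ` with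
`nᵢ ↗ ∞` and `xᵢ ∈ π⁻¹(K)`. -/
def rotSetOn {d : ℕ} (F : Rd d ≃ₜ Rd d) (K : Set (Torus d)) : Set (Rd d) :=
  {ρ | ∃ (n : ℕ → ℕ) (x : ℕ → Rd d), StrictMono n ∧ (∀ i, projT (x i) ∈ K) ∧
    Tendsto (fun i => (n i : ℝ)⁻¹ • ((⇑F)^[n i] (x i) - x i)) atTop (𝓝 ρ)}

/-- The affine hyperplane `lam • v + {v}^⊥`. -/
def affHyp {d : ℕ} (v : Rd d) (lam : ℝ) : Set (Rd d) :=
  {w | ∃ u : Rd d, ⟪u, v⟫ = 0 ∧ w = lam • v + u}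

/-- Bounded mean motion parallel to `v` on `K`:  `|⟨Fⁿ z − z − n ρ, v⟩| ≤ c` for all
`n ∈ ℤ` and `z ∈ π⁻¹(K)`, where `ρ = lam • v` is a point of the hyperplane
`lam • v + {v}^⊥` containing the rotation set (the value of the inner product does
not depend on the choice of `ρ` in this hyperplane). -/
def BddMeanMotionParallelOn {d : ℕ} (F : Rd d ≃ₜ Rd d) (v : Rd d) (lam : ℝ)
    (K : Set (Torus d)) : Prop :=
  ∃ c : ℝ, 0 < c ∧ ∀ (n : ℤ) (z : Rd d), projT z ∈ K →
    |⟪iterZ F n z - z - (n : ℝ) • (lam • v), v⟫| ≤ c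

/-!
The drift `⟨F z - z, v⟩ - ρ₀` is `ℤ^d`-periodic, so it descends to a continuous function `φ` on the
torus, and bounded mean motion says that the Birkhoff sums of `φ` along orbits in `K` are bounded.
By the Gottschalk–Hedlund theorem `φ` is then a coboundary, `φ = u ∘ f - u` on `K` with `u`
continuous, and `H z = ⟨z, v⟩ - u (π z)` satisfies `H ∘ F = H + ρ₀` and stays within `sup_K |u|` of
`⟨z, v⟩`. Modulo `1` it descends to the semi-conjugacy, whose image is compact and forward invariant
under an irrational rotation, hence the whole circle.

For Gottschalk–Hedlund, let `M` and `M'` be the suprema of the forward Birkhoff sums of `φ` and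
of `-φ`. Both are lower semicontinuous, with `φ + M ∘ f ≤ M` and `-φ + M' ∘ f ≤ M'`. Thus `M + M'`
does not increase along orbits, and being lower semicontinuous it is constant by minimality. Hence
`M` is continuous, and adding the two inequalities forces equality: `u = -M`.
-/

section GottschalkHedlund

open Set

variable {X : Type*} {f : X → X} {φ : X → ℝ}

/-- The supremum over `n ≥ 0` of the `n`-th Birkhoff sums of `φ` at `x`; it has the junk value `0`
where these sums are unbounded above. -/
def birkhoffSup (f : X → X) (φ : X → ℝ) (x : X) : ℝ := ⨆ n : ℕ, birkhoffSum f φ n x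

theorem add_birkhoffSup_apply_le {x : X} (hx : BddAbove (range fun n => birkhoffSum f φ n x)) :
    φ x + birkhoffSup f φ (f x) ≤ birkhoffSup f φ x := by
  rw [← le_sub_iff_add_le']
  refine ciSup_le fun n => ?_
  rw [le_sub_iff_add_le', ← birkhoffSum_succ']
  exact le_ciSup hx (n + 1)

variable [TopologicalSpace X] {K : Set X}

theorem apply_le_of_mem_closure_orbit {β : Type*} [LinearOrder β] {w : X → β}
    (hw : LowerSemicontinuousOn w K) (hf : MapsTo f K K) (hle : ∀ x ∈ K, w (f x) ≤ w x)
    {x y : X} (hx : x ∈ K) (hy : y ∈ K) (hxy : y ∈ closure (range fun n : ℕ => f^[n] x)) :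
    w y ≤ w x := by
  have horbit : ∀ n : ℕ, w (f^[n] x) ≤ w x := by
    intro n
    induction n with
    | zero => exact le_rfl
    | succ n ih =>
      rw [Function.iterate_succ_apply']
      exact (hle _ (hf.iterate n hx)).trans ih
  by_contra! hlt
  have hnear : ∀ᶠ y' in 𝓝 y, y' ∈ K → w x < w y' :=
    eventually_nhdsWithin_iff.1 (hw y hy (w x) hlt)
  obtain ⟨_, ⟨n, rfl⟩, hn⟩ := ((mem_closure_iff_frequently.1 hxy).and_eventually hnear).exists
  exact (hn (hf.iterate n hx)).not_ge (horbit n)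

theorem continuousOn_birkhoffSum (hf : ContinuousOn f K) (hmaps : MapsTo f K K)
    (hφ : ContinuousOn φ K) (n : ℕ) : ContinuousOn (birkhoffSum f φ n) K :=
  continuousOn_finsetSum _ fun k _ => hφ.comp (hf.iterate hmaps k) (hmaps.iterate k)

theorem lowerSemicontinuousOn_birkhoffSup (hf : ContinuousOn f K) (hmaps : MapsTo f K K)
    (hφ : ContinuousOn φ K) (hbdd : ∀ x ∈ K, BddAbove (range fun n => birkhoffSum f φ n x)) :
    LowerSemicontinuousOn (birkhoffSup f φ) K :=
  lowerSemicontinuousOn_ciSup hbdd fun n =>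
    (continuousOn_birkhoffSum hf hmaps hφ n).lowerSemicontinuousOn

/-- **Gottschalk–Hedlund theorem**. -/
theorem exists_continuousOn_apply_eq_add (hf : ContinuousOn f K) (hmaps : MapsTo f K K)
    (hmin : ∀ x ∈ K, K ⊆ closure (range fun n : ℕ => f^[n] x)) (hφ : ContinuousOn φ K)
    (hbdd : ∀ x ∈ K, ∃ c, ∀ n, |birkhoffSum f φ n x| ≤ c) :
    ∃ u : X → ℝ, ContinuousOn u K ∧ ∀ x ∈ K, u (f x) = u x + φ x := by
  have hbdd_pos : ∀ x ∈ K, BddAbove (range fun n => birkhoffSum f φ n x) := fun x hx =>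
    (hbdd x hx).imp fun c hc => forall_mem_range.2 fun n => (le_abs_self _).trans (hc n)
  have hbdd_neg : ∀ x ∈ K, BddAbove (range fun n => birkhoffSum f (-φ) n x) := fun x hx =>
    (hbdd x hx).imp fun c hc => forall_mem_range.2 fun n => by
      rw [birkhoffSum_neg]
      exact (neg_le_abs _).trans (hc n)
  set M := birkhoffSup f φ
  set M' := birkhoffSup f (-φ)
  have hM : LowerSemicontinuousOn M K := lowerSemicontinuousOn_birkhoffSup hf hmaps hφ hbdd_pos
  have hM' : LowerSemicontinuousOn M' K :=
    lowerSemicontinuousOn_birkhoffSup hf hmaps hφ.neg hbdd_neg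
  have hstep : ∀ x ∈ K, φ x + M (f x) ≤ M x := fun x hx => add_birkhoffSup_apply_le (hbdd_pos x hx)
  have hstep' : ∀ x ∈ K, -φ x + M' (f x) ≤ M' x := fun x hx =>
    add_birkhoffSup_apply_le (hbdd_neg x hx)
  have hosc : ∀ x ∈ K, ∀ y ∈ K, M y + M' y ≤ M x + M' x := fun x hx y hy =>
    apply_le_of_mem_closure_orbit (hM.add hM') hmaps
      (fun z hz => by linarith [hstep z hz, hstep' z hz]) hx hy (hmin x hx hy)
  refine ⟨-M, ContinuousOn.neg (continuousOn_iff_lower_upperSemicontinuousOn.2 ⟨hM, ?_⟩),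
    fun x hx => ?_⟩
  · intro x hx t ht
    filter_upwards [hM' x hx (M x + M' x - t) (by linarith), self_mem_nhdsWithin] with y hy hyK
    linarith [hosc x hx y hyK]
  · simp only [Pi.neg_apply]
    linarith [hstep x hx, hstep' x hx, hosc (f x) (hmaps hx) x hx]

end GottschalkHedlund

theorem birkhoffSum_of_semiconj {X Y A : Type*} [AddCommGroup A] {p : Y → X} {F : Y → Y}
    {f : X → X} (hp : Function.Semiconj p F f) {φ : X → A} {g : Y → A} {a : A}
    (hφ : ∀ y, φ (p y) = g (F y) - g y - a) (n : ℕ) (y : Y) :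
    birkhoffSum f φ n (p y) = g (F^[n] y) - g y - n • a := by
  induction n with
  | zero => simp
  | succ n ih =>
    rw [birkhoffSum_succ, ih, ← (hp.iterate_right n).eq, hφ, Function.iterate_succ_apply',
      succ_nsmul]
    abel

theorem eq_univ_of_add_mem_of_denseRange_zsmul {G : Type*} [AddGroup G] [TopologicalSpace G]
    [IsTopologicalAddGroup G] [CompactSpace G] {a : G} (ha : DenseRange (· • a : ℤ → G))
    {S : Set G} (hS : IsClosed S) (hne : S.Nonempty) (hadd : ∀ x ∈ S, x + a ∈ S) :
    S = Set.univ := by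
  obtain ⟨x, hx⟩ := hne
  have horbit : ∀ n : ℕ, x + n • a ∈ S := by
    intro n
    induction n with
    | zero => simpa only [zero_nsmul, add_zero] using hx
    | succ n ih => simpa only [succ_nsmul, add_assoc] using hadd _ ih
  have hdense : DenseRange fun n : ℕ => x + n • a :=
    (Homeomorph.addLeft x).surjective.denseRange.comp (denseRange_zsmul_iff_nsmul.1 ha)
      (Homeomorph.addLeft x).continuous
  rw [← hS.closure_eq, (hdense.mono (Set.range_subset_iff.2 horbit)).closure_eq]

section Torus

variable {d : ℕ}

theorem intVec_ne_zero {v : Fin d → ℤ} (hv : v ≠ 0) : intVec v ≠ 0 := by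
  contrapose! hv
  ext i
  simpa [intVec] using congrArg (fun w : Rd d => w i) hv

theorem isOpenQuotientMap_projT : IsOpenQuotientMap (projT : Rd d → Torus d) :=
  (IsOpenQuotientMap.piMap fun _ : Fin d => QuotientAddGroup.isOpenQuotientMap_mk).comp
    (EuclideanSpace.equiv (Fin d) ℝ).toHomeomorph.isOpenQuotientMap

theorem exists_eq_add_intVec_of_projT_eq {z w : Rd d} (h : projT z = projT w) :
    ∃ m : Fin d → ℤ, z = w + intVec m := by
  have hcoord : ∀ i, ∃ k : ℤ, z i = w i + k := by
    intro i
    have hi : ((z i - w i : ℝ) : AddCircle (1 : ℝ)) = 0 := by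
      rw [AddCircle.coe_sub, sub_eq_zero]
      exact congrFun h i
    obtain ⟨k, hk⟩ := (AddCircle.coe_eq_zero_iff (1 : ℝ)).1 hi
    rw [zsmul_one] at hk
    exact ⟨k, by rw [hk, add_sub_cancel]⟩
  choose m hm using hcoord
  exact ⟨m, PiLp.ext hm⟩

theorem exists_continuous_apply_projT_eq {Y : Type*} [TopologicalSpace Y] {g : Rd d → Y}
    (hg : Continuous g) (hper : ∀ z m, g (z + intVec m) = g z) :
    ∃ ψ : Torus d → Y, Continuous ψ ∧ ∀ z, ψ (projT z) = g z := by
  have hfactors : g.FactorsThrough projT := by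
    intro z w hzw
    obtain ⟨m, rfl⟩ := exists_eq_add_intVec_of_projT_eq hzw
    exact hper w m
  let ψ : Torus d → Y := g ∘ Function.surjInv isOpenQuotientMap_projT.surjective
  have hψ : ψ ∘ projT = g := funext fun _ => hfactors (Function.surjInv_eq _ _)
  exact ⟨ψ, isOpenQuotientMap_projT.continuous_comp_iff.1 (hψ ▸ hg), congrFun hψ⟩

/-- The character `x ↦ ⟨x, v⟩ mod 1` of the torus given by an integer vector `v`. -/
def torusChar (v : Fin d → ℤ) (x : Torus d) : AddCircle (1 : ℝ) := ∑ i, v i • x i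

theorem continuous_torusChar (v : Fin d → ℤ) : Continuous (torusChar v) := by
  unfold torusChar
  fun_prop

theorem inner_intVec (z : Rd d) (v : Fin d → ℤ) : ⟪z, intVec v⟫ = ∑ i, (v i : ℝ) * z i := by
  simp [PiLp.inner_apply, intVec]

theorem torusChar_projT (v : Fin d → ℤ) (z : Rd d) :
    torusChar v (projT z) = (⟪z, intVec v⟫ : ℝ) := by
  simp only [torusChar, projT, inner_intVec, ← AddCircle.coe_zsmul, zsmul_eq_mul]
  exact (map_sum (QuotientAddGroup.mk' (AddSubgroup.zmultiples (1 : ℝ))) _ _).symm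

theorem exists_continuousOn_transfer {f : Torus d → Torus d} {F : Rd d → Rd d} (hF : Continuous F)
    (hlift : ∀ z, projT (F z) = f (projT z)) (hper : ∀ z m, F (z + intVec m) = F z + intVec m)
    {K : Set (Torus d)} (hmaps : Set.MapsTo f K K)
    (hmin : ∀ x ∈ K, K ⊆ closure (Set.range fun n : ℕ => f^[n] x)) {v : Rd d} {ρ : ℝ}
    (hbdd : ∀ z, projT z ∈ K → ∃ c, ∀ n : ℕ, |⟪F^[n] z - z, v⟫ - n * ρ| ≤ c) :
    ∃ u : Torus d → ℝ, ContinuousOn u K ∧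
      ∀ z, projT z ∈ K → u (projT (F z)) = u (projT z) + (⟪F z, v⟫ - ⟪z, v⟫ - ρ) := by
  have hf : Continuous f := by
    rw [← isOpenQuotientMap_projT.continuous_comp_iff]
    exact (isOpenQuotientMap_projT.continuous.comp hF).congr hlift
  obtain ⟨φ, hφ, hφ_projT⟩ :=
    exists_continuous_apply_projT_eq (g := fun z => ⟪F z, v⟫ - ⟪z, v⟫ - ρ) (by fun_prop)
      fun z m => by simp only [hper, inner_add_left, add_sub_add_right_eq_sub]
  have hsum : ∀ x ∈ K, ∃ c, ∀ n, |birkhoffSum f φ n x| ≤ c := by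
    intro x hx
    obtain ⟨z, rfl⟩ := isOpenQuotientMap_projT.surjective x
    refine (hbdd z hx).imp fun c hc n => ?_
    rw [birkhoffSum_of_semiconj (g := fun z => ⟪z, v⟫) hlift hφ_projT, ← inner_sub_left,
      nsmul_eq_mul]
    exact hc n
  obtain ⟨u, hu, hcob⟩ := exists_continuousOn_apply_eq_add hf.continuousOn hmaps hmin
    hφ.continuousOn hsum
  exact ⟨u, hu, fun z hz => by rw [hlift, hcob _ hz, hφ_projT]⟩

theorem BddMeanMotionParallelOn.exists_abs_inner_iterate_sub_le {F : Rd d ≃ₜ Rd d} {v : Rd d}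
    (hv : v ≠ 0) {ρ : ℝ} {K : Set (Torus d)}
    (h : BddMeanMotionParallelOn F v (ρ / ‖v‖ ^ 2) K) (z : Rd d) (hz : projT z ∈ K) :
    ∃ c, ∀ n : ℕ, |⟪F^[n] z - z, v⟫ - n * ρ| ≤ c := by
  obtain ⟨c, -, hc⟩ := h
  refine ⟨c, fun n => ?_⟩
  have hρ : ρ / ‖v‖ ^ 2 * ⟪v, v⟫ = ρ := by
    rw [real_inner_self_eq_norm_sq, div_mul_cancel₀ _ (pow_ne_zero 2 (norm_ne_zero_iff.2 hv))]
  have hn := hc n z hz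
  rwa [inner_sub_left, real_inner_smul_left, real_inner_smul_left, hρ, Int.cast_natCast] at hn

end Torus

theorem statement1_general {d : ℕ} (f : Torus d → Torus d) (F : Rd d → Rd d) (hF : Continuous F)
    (hlift : ∀ z, projT (F z) = f (projT z)) (hper : ∀ z m, F (z + intVec m) = F z + intVec m)
    (K : Set (Torus d)) (hne : K.Nonempty) (hcomp : IsCompact K) (hmaps : Set.MapsTo f K K)
    (hmin : ∀ x ∈ K, K ⊆ closure (Set.range fun n : ℕ => f^[n] x))
    (v : Fin d → ℤ) (ρ₀ : ℝ) (hρ₀ : Irrational ρ₀)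
    (hbdd : ∀ z, projT z ∈ K → ∃ c, ∀ n : ℕ, |⟪F^[n] z - z, intVec v⟫ - n * ρ₀| ≤ c) :
    ∃ (h : Torus d → AddCircle (1 : ℝ)) (B : Fin d → ℤ),
      ContinuousOn h K ∧ h '' K = Set.univ ∧
      (∀ x ∈ K, h (f x) = h x + (ρ₀ : AddCircle (1 : ℝ))) ∧
      ∃ H : Rd d → ℝ,
        (∀ z : Rd d, projT z ∈ K → (H z : AddCircle (1 : ℝ)) = h (projT z)) ∧
        (∀ z : Rd d, projT z ∈ K → H (F z) = H z + ρ₀) ∧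
        ∃ c : ℝ, ∀ z : Rd d, projT z ∈ K → |H z - ∑ i, (B i : ℝ) * z i| ≤ c := by
  obtain ⟨u, hu, hcob⟩ := exists_continuousOn_transfer hF hlift hper hmaps hmin hbdd
  let h : Torus d → AddCircle (1 : ℝ) := fun x => torusChar v x - (u x : AddCircle (1 : ℝ))
  let H : Rd d → ℝ := fun z => ⟪z, intVec v⟫ - u (projT z)
  have hHh : ∀ z, (H z : AddCircle (1 : ℝ)) = h (projT z) := fun z => by
    simp only [H, h, torusChar_projT, AddCircle.coe_sub]
  have hHF : ∀ z, projT z ∈ K → H (F z) = H z + ρ₀ := fun z hz => by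
    simp only [H]
    linarith [hcob z hz]
  have hh : ContinuousOn h K := (continuous_torusChar v).continuousOn.sub
    ((AddCircle.continuous_mk' (1 : ℝ)).comp_continuousOn hu)
  have hconj : ∀ x ∈ K, h (f x) = h x + (ρ₀ : AddCircle (1 : ℝ)) := by
    intro x hx
    obtain ⟨z, rfl⟩ := isOpenQuotientMap_projT.surjective x
    rw [← hlift, ← hHh, ← hHh, hHF z hx, AddCircle.coe_add]
  have hsurj : h '' K = Set.univ := by
    refine eq_univ_of_add_mem_of_denseRange_zsmul
      (AddCircle.denseRange_zsmul_coe_iff.2 (by rwa [div_one]))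
      (hcomp.image_of_continuousOn hh).isClosed (hne.image h) ?_
    rintro _ ⟨x, hx, rfl⟩
    exact ⟨f x, hmaps hx, hconj x hx⟩
  obtain ⟨c, hc⟩ := hcomp.exists_bound_of_continuousOn hu
  refine ⟨h, v, hh, hsurj, hconj, H, fun z _ => hHh z, hHF, c, fun z hz => ?_⟩
  rw [← inner_intVec, sub_sub_cancel_left, abs_neg]
  exact hc _ hz

/-- **Proposition 2.1.**  If `f` has a minimal set `K` with rotation set contained in
the hyperplane `(ρ₀/‖v‖²) v + {v}^⊥` (where `v` is an integer vector with coprime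
coordinates and `ρ₀` is irrational) and has bounded mean motion parallel to `v` on
`K`, then `f|_K` is semi-conjugate to the one-dimensional irrational rotation
`r_{ρ₀}`, regularly with respect to some `1 × d` integer matrix `B`. -/
theorem statement1 {d : ℕ} (f : Torus d ≃ₜ Torus d) (F : Rd d ≃ₜ Rd d) (hF : IsLift f F)
    (K : Set (Torus d)) (hK : IsMinimalSet f K)
    (v : Fin d → ℤ) (hv : v ≠ 0) (hgcd : Finset.univ.gcd v = 1)
    (ρ₀ : ℝ) (hρ₀ : Irrational ρ₀)
    (hrot : rotSetOn F K ⊆ affHyp (intVec v) (ρ₀ / ‖intVec v‖ ^ 2))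
    (hbmm : BddMeanMotionParallelOn F (intVec v) (ρ₀ / ‖intVec v‖ ^ 2) K) :
    ∃ (h : Torus d → AddCircle (1 : ℝ)) (B : Fin d → ℤ),
      ContinuousOn h K ∧ h '' K = Set.univ ∧
      (∀ x ∈ K, h (f x) = h x + (ρ₀ : AddCircle (1 : ℝ))) ∧
      ∃ H : Rd d → ℝ,
        (∀ z : Rd d, projT z ∈ K → (H z : AddCircle (1 : ℝ)) = h (projT z)) ∧
        (∀ z : Rd d, projT z ∈ K → H (F z) = H z + ρ₀) ∧
        ∃ c : ℝ, ∀ z : Rd d, projT z ∈ K → |H z - ∑ i, (B i : ℝ) * z i| ≤ c :=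
  statement1_general f F F.continuous hF.1 hF.2 K hK.1 hK.2.1
    (Set.mapsTo_iff_image_subset.2 hK.2.2.1.subset) hK.2.2.2 v ρ₀ hρ₀
    (hbmm.exists_abs_inner_iterate_sub_le (intVec_ne_zero hv))
end
end

section
/- Let f be a conservative homeomorphism of 𝕋² homotopic to the identity which is a pseudo-rotation with rotation vector ρ ∈ ℝ² (with respect to a lift F) and has bounded mean motion. Then ρ is rational (ρ ∈ ℚ²) if and only if f has a periodic point, i.e. there exist x ∈ 𝕋² and q ≥ 1 with f^q(x) = x. -/
open Filter Topology

local notation "⟪" x ", " y "⟫" => @inner ℝ _ _ x y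

noncomputable section

/-- `f` (with lift `F`) is a pseudo-rotation with rotation vector `ρ` on the invariant
set `K`: `(Fⁿ z − z)/n → ρ` for every `z ∈ π⁻¹(K)`. -/
def IsPseudoRotationOn {d : ℕ} (F : Rd d ≃ₜ Rd d) (ρ : Rd d) (K : Set (Torus d)) : Prop :=
  ∀ z : Rd d, projT z ∈ K →
    Tendsto (fun n : ℕ => (n : ℝ)⁻¹ • ((⇑F)^[n] z - z)) atTop (𝓝 ρ)

/-- Bounded mean motion on `K`: `‖Fⁿ z − z − n ρ‖ ≤ c` for all `n ∈ ℤ` and `z ∈ π⁻¹(K)`. -/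
def BddMeanMotionOn {d : ℕ} (F : Rd d ≃ₜ Rd d) (ρ : Rd d) (K : Set (Torus d)) : Prop :=
  ∃ c : ℝ, 0 ≤ c ∧ ∀ (n : ℤ) (z : Rd d), projT z ∈ K →
    ‖iterZ F n z - z - (n : ℝ) • ρ‖ ≤ c

/-- `f` is conservative: it admits an invariant Borel probability measure of full
topological support. -/
def Conservative (f : Torus 2 ≃ₜ Torus 2) : Prop :=
  ∃ μ : MeasureTheory.Measure (Torus 2), MeasureTheory.IsProbabilityMeasure μ ∧
    MeasureTheory.MeasurePreserving (⇑f) μ μ ∧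
    ∀ U : Set (Torus 2), IsOpen U → U.Nonempty → 0 < μ U

/-!
By Brouwer's lemma, a fixed point free homeomorphism `G` of the plane with bounded displacement has
no periodic points. Period two is excluded by following the directions of `G z - z` and
`G v - G u` continuously. For higher periods, let `V` be a connected open set disjoint from its
image. If an orbit returned to `V` after fewer than `n` steps, then following `G` by a
homeomorphism supported in `V` would create a periodic point of period less than `n` without
creating a fixed point. A point `x` of period `n` is excluded by applying this to neighbourhoods of
segments in a maximal ball around `x` disjoint from its image: the closed ball contains some `y`
together with `G y`, and sending `x` to `G y` makes `G x` return close to `G y`.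

Without periodic points no orbit returns to a small ball, so `G` has no bounded orbit either. If
`q • ρ` is an integer vector `m`, then bounded mean motion makes the orbits of `F^[q] - m` bounded;
a fixed point of this map projects to a periodic point of `f`. Conversely, `F^[q] z = z + m` gives
`F^[q * n] z = z + n • m`, which stays at bounded distance from `z + n • (q • ρ)` for all `n` only
if `q • ρ = m`.
-/

section ContinuousLog

open Complex

theorem exists_continuous_log {X : Type*} [TopologicalSpace X] [SimplyConnectedSpace X]
    [LocallyPathConnectedSpace X] {g : X → ℂ} (hg : Continuous g) (h0 : ∀ x, g x ≠ 0) :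
    ∃ L : X → ℂ, Continuous L ∧ ∀ x, exp (L x) = g x := by
  obtain ⟨x₀⟩ := (inferInstance : Nonempty X)
  obtain ⟨L, ⟨-, hL⟩, -⟩ := isCoveringMapOn_exp.existsUnique_continuousMap_lifts
    ⟨g, hg⟩ (a₀ := x₀) (exp_log (h0 x₀)) h0
  exact ⟨L, L.continuous, congrFun hL⟩

variable {X : Type*} [TopologicalSpace X] [PreconnectedSpace X]

theorem exists_int_forall_eq_add_of_exp_eq {L L' : X → ℂ} (hL : Continuous L)
    (hL' : Continuous L') (h : ∀ x, exp (L x) = exp (L' x)) :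
    ∃ n : ℤ, ∀ x, L x = L' x + n * (2 * Real.pi * I) := by
  rcases isEmpty_or_nonempty X with hX | ⟨⟨x₀⟩⟩
  · exact ⟨0, fun x => isEmptyElim x⟩
  · obtain ⟨n, hn⟩ := exp_eq_exp_iff_exists_int.1 (h x₀)
    refine ⟨n, congrFun (isCoveringMap_exp.eq_of_comp_eq hL (by fun_prop) ?_ x₀ hn)⟩
    ext x
    simp only [Function.comp_apply, exp_add, exp_int_mul_two_pi_mul_I, mul_one, h x]

theorem eq_of_exp_eq_of_exp_mem_slitPlane {L : X → ℂ} (hL : Continuous L)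
    (hslit : ∀ x, exp (L x) ∈ slitPlane) {a b : X} (hab : exp (L a) = exp (L b)) :
    L a = L b := by
  obtain ⟨n, hn⟩ := exists_int_forall_eq_add_of_exp_eq hL
    (hL.cexp.clog hslit) fun x => (exp_log (exp_ne_zero _)).symm
  rw [hn a, hn b, hab]

end ContinuousLog

section PeriodTwo

open Complex

/-- The ratio `(G v - G u) / (v - u)` as a function of `(u, w)`, where `v = u + exp w`. The
exponential coordinate makes the space of pairs `u ≠ v` simply connected, so that the ratio has
a logarithm; adding `2πi` to `w` turns `v` once around `u`. -/
def expSlope (G : ℂ → ℂ) (p : ℂ × ℂ) : ℂ :=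
  (G (p.1 + exp p.2) - G p.1) / exp p.2

theorem expSlope_swap (G : ℂ → ℂ) (u w : ℂ) :
    expSlope G (u + exp w, w + Real.pi * I) = expSlope G (u, w) := by
  simp only [expSlope, exp_add_pi_mul_I, add_neg_cancel_right, div_neg, ← neg_div, neg_sub]

theorem expSlope_add_two_pi_mul_I (G : ℂ → ℂ) (u w : ℂ) :
    expSlope G (u, w + 2 * Real.pi * I) = expSlope G (u, w) := by
  simp only [expSlope, exp_periodic w]

variable {G : ℂ → ℂ}

theorem expSlope_ne_zero (hG : G.Injective) (p : ℂ × ℂ) : expSlope G p ≠ 0 :=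
  div_ne_zero (sub_ne_zero.2 (hG.ne (by simp))) (exp_ne_zero _)

theorem continuous_expSlope (hG : Continuous G) : Continuous (expSlope G) :=
  Continuous.div (by fun_prop) (by fun_prop) fun _ => exp_ne_zero _

theorem expSlope_mem_slitPlane {c : ℝ} (hG : ∀ z, dist (G z) z ≤ c) {u w : ℂ}
    (hw : 2 * c < ‖exp w‖) : expSlope G (u, w) ∈ slitPlane := by
  apply ball_one_subset_slitPlane
  have hdiff : expSlope G (u, w) - 1 =
      ((G (u + exp w) - (u + exp w)) - (G u - u)) / exp w := by
    rw [expSlope, div_sub_one (exp_ne_zero w)]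
    ring
  rw [mem_ball_iff_norm, hdiff, norm_div, div_lt_one (norm_pos_iff.2 (exp_ne_zero w))]
  calc ‖(G (u + exp w) - (u + exp w)) - (G u - u)‖
      ≤ ‖G (u + exp w) - (u + exp w)‖ + ‖G u - u‖ := norm_sub_le _ _
    _ ≤ c + c := by simpa only [dist_eq_norm] using add_le_add (hG _) (hG u)
    _ < ‖exp w‖ := by linarith

variable {L : ℂ × ℂ → ℂ}

-- Far from `u`, bounded displacement keeps the ratio near `1`, so that it does not wind around `0`
-- when `v` turns around `u`; by connectedness it winds around `0` nowhere.
theorem log_expSlope_add_two_pi_mul_I {c : ℝ} (hG : ∀ z, dist (G z) z ≤ c) (hL : Continuous L)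
    (hexp : ∀ p, exp (L p) = expSlope G p) (u w : ℂ) :
    L (u, w + 2 * Real.pi * I) = L (u, w) := by
  obtain ⟨k, hk⟩ := exists_int_forall_eq_add_of_exp_eq
    (L := fun p : ℂ × ℂ => L (p.1, p.2 + 2 * Real.pi * I)) (by fun_prop) hL fun p => by
      rw [hexp, hexp, expSlope_add_two_pi_mul_I]
  obtain ⟨R, hR⟩ : ∃ R : ℝ, 2 * c < Real.exp R :=
    (Real.tendsto_exp_atTop.eventually_gt_atTop (2 * c)).exists
  have hfar : L (0, R + (2 * Real.pi : ℝ) * I) = L (0, R + (0 : ℝ) * I) := by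
    refine eq_of_exp_eq_of_exp_mem_slitPlane (L := fun t : ℝ => L (0, R + t * I)) (by fun_prop)
      (fun t => ?_) ?_
    · rw [hexp]
      exact expSlope_mem_slitPlane hG (by simpa [norm_exp] using hR)
    · simp only [hexp, ofReal_mul, ofReal_ofNat, expSlope_add_two_pi_mul_I, ofReal_zero, zero_mul,
        add_zero]
  have hk0 : (k : ℂ) * (2 * Real.pi * I) = 0 := by
    have := hk (0, R)
    push_cast at hfar
    rwa [hfar, zero_mul, add_zero, left_eq_add] at this
  rw [hk (u, w), hk0, add_zero]

theorem log_expSlope_swap {c : ℝ} (hG : ∀ z, dist (G z) z ≤ c) (hL : Continuous L)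
    (hexp : ∀ p, exp (L p) = expSlope G p) (u w : ℂ) :
    L (u + exp w, w + Real.pi * I) = L (u, w) := by
  obtain ⟨k, hk⟩ := exists_int_forall_eq_add_of_exp_eq
    (L := fun p : ℂ × ℂ => L (p.1 + exp p.2, p.2 + Real.pi * I)) (by fun_prop) hL fun p => by
      rw [hexp, hexp, expSlope_swap]
  have hswap := hk (u, w)
  have hswap_swap := hk (u + exp w, w + Real.pi * I)
  simp only [exp_add_pi_mul_I, add_neg_cancel_right] at hswap hswap_swap
  rw [show w + Real.pi * I + Real.pi * I = w + 2 * Real.pi * I by ring,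
    log_expSlope_add_two_pi_mul_I hG hL hexp] at hswap_swap
  linear_combination (hswap - hswap_swap) / 2

-- With `θ` a logarithm of `G z - z` and `L` one of `expSlope G`, the increment of `θ` from `z` to
-- `G z` is `L (z, θ z)` up to a constant. A period two orbit `x ↦ y ↦ x` swaps the endpoints of one
-- segment, so `θ y - θ x = θ x - θ y` by symmetry of `L`, although `G x - x = -(G y - y)`.
theorem apply_apply_ne_self_of_forall_ne (hc : Continuous G) (hinj : G.Injective) {c : ℝ}
    (hG : ∀ z, dist (G z) z ≤ c) (hfix : ∀ z, G z ≠ z) (x : ℂ) : G (G x) ≠ x := by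
  intro hx
  obtain ⟨L, hLc, hL⟩ := exists_continuous_log (continuous_expSlope hc) (expSlope_ne_zero hinj)
  obtain ⟨θ, hθc, hθ⟩ := exists_continuous_log (g := fun z => G z - z) (by fun_prop)
    fun z => sub_ne_zero.2 (hfix z)
  have hadd (z : ℂ) : z + exp (θ z) = G z := by rw [hθ, add_sub_cancel]
  obtain ⟨m, hm⟩ := exists_int_forall_eq_add_of_exp_eq
    (L := fun z => L (z, θ z)) (L' := fun z => θ (G z) - θ z) (by fun_prop) (by fun_prop)
    fun z => by rw [exp_sub, hL, expSlope, hadd, hθ (G z)]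
  obtain ⟨j, hj⟩ : ∃ j : ℤ, θ (G x) = θ x + Real.pi * I + j * (2 * Real.pi * I) := by
    rw [← exp_eq_exp_iff_exists_int, exp_add_pi_mul_I, hθ, hθ, hx, neg_sub]
  have hper : L (G x, θ x + Real.pi * I + j * (2 * Real.pi * I)) = L (G x, θ x + Real.pi * I) :=
    Function.Periodic.int_mul (f := fun w => L (G x, w))
      (log_expSlope_add_two_pi_mul_I hG hLc hL (G x)) j _
  have hLeq : L (G x, θ (G x)) = L (x, θ x) := by
    rw [hj, hper, ← log_expSlope_swap hG hLc hL x, hadd]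
  have hθeq : θ (G x) = θ x := by
    have hθx := hm x
    have hθGx := hm (G x)
    rw [hLeq, hx] at hθGx
    linear_combination (hθGx - hθx) / 2
  have hopp : G x - x = x - G x := by rw [← hθ, ← hθeq, hθ, hx]
  exact hfix x (by linear_combination hopp / 2)

end PeriodTwo

/-- The homeomorphisms of a metric space that move all points by a bounded distance. They form a
subgroup, so bounded displacement survives the modifications of a map in Brouwer's lemma. -/
def bddDisplacement (X : Type*) [PseudoMetricSpace X] : Subgroup (X ≃ₜ X) where
  carrier := {G | ∃ c : ℝ, ∀ z, dist (G z) z ≤ c}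
  mul_mem' := by
    rintro G H ⟨c, hc⟩ ⟨c', hc'⟩
    exact ⟨c + c', fun z => (dist_triangle _ (H z) _).trans (add_le_add (hc _) (hc' z))⟩
  one_mem' := ⟨0, fun z => (dist_self z).le⟩
  inv_mem' := by
    rintro G ⟨c, hc⟩
    exact ⟨c, fun z => by simpa [dist_comm] using hc (G⁻¹ z)⟩

section MovingPoints

open Set Metric

variable {E : Type*} [NormedAddCommGroup E] [NormedSpace ℝ E] [CompleteSpace E]

theorem exists_homeomorph_add_of_lipschitzWith {g : E → E} {K : NNReal} (hg : LipschitzWith K g)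
    (hK : K < 1) : ∃ φ : E ≃ₜ E, ∀ z, φ z = z + g z := by
  have happrox : ApproximatesLinearOn (fun z => z + g z)
      (ContinuousLinearEquiv.refl ℝ E : E →L[ℝ] E) univ K :=
    fun p _ q _ => by simpa [add_sub_add_comm] using hg.norm_sub_le p q
  have hsmall : Subsingleton E ∨ K < ‖((ContinuousLinearEquiv.refl ℝ E).symm : E →L[ℝ] E)‖₊⁻¹ := by
    rcases subsingleton_or_nontrivial E with hE | hE
    · exact Or.inl hE
    · simp [hK]
  exact ⟨happrox.toHomeomorph _ hsmall, fun z => rfl⟩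

theorem exists_homeomorph_eqOn_compl_ball {c b : E} {r : ℝ} (hb : b ∈ ball c r) :
    ∃ φ ∈ bddDisplacement E, EqOn φ id (ball c r)ᶜ ∧ φ c = b := by
  have hr : 0 < r := pos_of_mem_ball hb
  let bump := thickenedIndicator hr {c}
  have hlip : LipschitzWith (r.toNNReal⁻¹ * ‖b - c‖₊) fun z => bump z • (b - c) :=
    LipschitzWith.of_dist_le_mul fun p q => calc
      dist (bump p • (b - c)) (bump q • (b - c)) = dist (bump p) (bump q) * ‖b - c‖ := by
        simp only [NNReal.smul_def, dist_eq_norm, ← sub_smul, norm_smul, NNReal.dist_eq,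
          Real.norm_eq_abs]
      _ ≤ r.toNNReal⁻¹ * dist p q * ‖b - c‖ := by
        gcongr
        exact (lipschitzWith_thickenedIndicator hr {c}).dist_le_mul p q
      _ = (r.toNNReal⁻¹ * ‖b - c‖₊ : NNReal) * dist p q := by push_cast; ring
  have hlt : r.toNNReal⁻¹ * ‖b - c‖₊ < 1 := by
    rw [inv_mul_lt_one₀ (Real.toNNReal_pos.2 hr), Real.lt_toNNReal_iff_coe_lt]
    exact mem_ball_iff_norm.1 hb
  obtain ⟨φ, hφ⟩ := exists_homeomorph_add_of_lipschitzWith hlip hlt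
  refine ⟨φ, ⟨‖b - c‖, fun z => ?_⟩, fun z hz => ?_, ?_⟩
  · rw [hφ, dist_self_add_left, NNReal.smul_def, norm_smul, NNReal.norm_eq]
    exact mul_le_of_le_one_left (norm_nonneg _) (thickenedIndicator_le_one hr {c} z)
  · rw [hφ, thickenedIndicator_zero hr {c} (by rwa [thickening_singleton]), zero_smul, add_zero,
      id]
  · rw [hφ, thickenedIndicator_one hr {c} rfl, one_smul, add_sub_cancel]

theorem exists_homeomorph_eqOn_compl_of_isPreconnected {V : Set E} (hVo : IsOpen V)
    (hV : IsPreconnected V) {a b : E} (ha : a ∈ V) (hb : b ∈ V) :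
    ∃ φ ∈ bddDisplacement E, EqOn φ id Vᶜ ∧ φ a = b := by
  refine hV.induction₂ (fun a b => ∃ φ ∈ bddDisplacement E, EqOn φ id Vᶜ ∧ φ a = b)
    (fun x hx => ?_) ?_ ?_ ha hb
  · obtain ⟨r, hr, hrV⟩ := isOpen_iff.1 hVo x hx
    filter_upwards [mem_nhdsWithin_of_mem_nhds (ball_mem_nhds x hr)] with y hy
    obtain ⟨φ, hφ, hφV, hφx⟩ := exists_homeomorph_eqOn_compl_ball hy
    exact ⟨φ, hφ, hφV.mono (compl_subset_compl.2 hrV), hφx⟩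
  · rintro x _ _ - - - ⟨φ, hφ, hφV, rfl⟩ ⟨ψ, hψ, hψV, rfl⟩
    exact ⟨ψ * φ, mul_mem hψ hφ, fun z hz => by simp [hφV hz, hψV hz], rfl⟩
  · rintro x _ - - ⟨φ, hφ, hφV, rfl⟩
    exact ⟨φ⁻¹, inv_mem hφ, fun z hz => φ.symm_apply_eq.2 (hφV hz).symm, φ.symm_apply_apply x⟩

end MovingPoints

section Thickening

open Set Metric

theorem eventually_mapsTo_thickening_compl {X Y : Type*} [PseudoMetricSpace X]
    [PseudoMetricSpace Y] {H : X → Y} (hH : Continuous H) {A : Set X} {B : Set Y}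
    (hA : IsCompact A) (hB : IsClosed B) (h : MapsTo H A Bᶜ) :
    ∀ᶠ ε in 𝓝[>] (0 : ℝ), MapsTo H (thickening ε A) (thickening ε B)ᶜ := by
  obtain ⟨δ, hδ, hdisj⟩ := Disjoint.exists_thickenings
    (disjoint_compl_left.mono_left h.image_subset) (hA.image hH) hB
  obtain ⟨η, hη, hsub⟩ := hA.exists_thickening_subset_open
    ((isOpen_thickening (δ := δ) (E := H '' A)).preimage hH)
    fun p hp => self_subset_thickening hδ _ (mem_image_of_mem H hp)
  filter_upwards [Ioo_mem_nhdsGT (lt_min hδ hη)] with ε hε p hp hHp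
  obtain ⟨hεδ, hεη⟩ := lt_min_iff.1 hε.2
  exact disjoint_left.1 hdisj (hsub (thickening_mono hεη.le _ hp)) (thickening_mono hεδ.le _ hHp)

theorem isPreconnected_thickening {E : Type*} [SeminormedAddCommGroup E] [NormedSpace ℝ E]
    {K : Set E} (hK : IsPreconnected K) (ε : ℝ) : IsPreconnected (thickening ε K) := by
  rw [← add_ball_zero, ← add_image_prod]
  exact (hK.prod (convex_ball 0 ε).isPreconnected).image _ continuous_add.continuousOn

theorem isCompact_segment {E : Type*} [AddCommGroup E] [Module ℝ E] [TopologicalSpace E]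
    [IsTopologicalAddGroup E] [ContinuousSMul ℝ E] (x y : E) : IsCompact (segment ℝ x y) := by
  rw [segment_eq_image]
  exact isCompact_Icc.image (by fun_prop)

end Thickening

section FreeModification

open Set

variable {X : Type*} {G φ : X → X} {V : Set X}

theorem comp_apply_ne_self (hfix : ∀ z, G z ≠ z) (hfree : MapsTo G V Vᶜ) (hinj : φ.Injective)
    (hφ : EqOn φ id Vᶜ) (z : X) : (φ ∘ G) z ≠ z := by
  intro h
  by_cases hz : z ∈ V
  · exact hfix z ((hφ (hfree hz)).symm.trans h)
  · exact hfix z (hinj (h.trans (hφ hz).symm))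

theorem iterate_succ_comp_apply (hφ : EqOn φ id Vᶜ) {p : X} {k : ℕ}
    (hp : ∀ j, 1 ≤ j → j ≤ k → G^[j] p ∉ V) : (φ ∘ G)^[k + 1] p = φ (G^[k + 1] p) := by
  induction k with
  | zero => rfl
  | succ k ih =>
    rw [Function.iterate_succ_apply', ih fun j h1 hjk => hp j h1 (hjk.trans k.le_succ),
      hφ (hp (k + 1) (by lia) le_rfl), Function.iterate_succ_apply' G (k + 1)]
    rfl

end FreeModification

/-- A fixed point free homeomorphism with bounded displacement. Bounded displacement stands in for
the orientation preservation of Brouwer homeomorphisms of the plane. -/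
structure IsBrouwer {X : Type*} [PseudoMetricSpace X] (G : X ≃ₜ X) : Prop where
  mem_bddDisplacement : G ∈ bddDisplacement X
  apply_ne_self : ∀ z, G z ≠ z

/-- Brouwer's lemma for the single period `n`: no fixed point free homeomorphism of `X` with
bounded displacement has a point fixed by its `n`-th iterate. The lemma is proved by induction
on `n`. -/
def NoPeriodicPt (X : Type*) [PseudoMetricSpace X] (n : ℕ) : Prop :=
  ∀ G : X ≃ₜ X, IsBrouwer G → ∀ x, G^[n] x ≠ x

section FreeSets

open Set Metric

theorem IsBrouwer.mul {X : Type*} [PseudoMetricSpace X] {G φ : X ≃ₜ X} {V : Set X}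
    (hG : IsBrouwer G) (hfree : MapsTo G V Vᶜ) (hφ : φ ∈ bddDisplacement X)
    (hφV : EqOn φ id Vᶜ) : IsBrouwer (φ * G) :=
  ⟨mul_mem hφ hG.mem_bddDisplacement,
    comp_apply_ne_self (G := G) hG.apply_ne_self hfree φ.injective hφV⟩

variable {E : Type*} [NormedAddCommGroup E] [NormedSpace ℝ E] [CompleteSpace E] {n k : ℕ}
  {G : E ≃ₜ E}

-- If `G^[k] p` came back to `V`, moving it to `p` inside `V` would create a point of period `k`.
theorem mapsTo_iterate_compl_of_isOpen (hn : ∀ k, 1 ≤ k → k < n → NoPeriodicPt E k)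
    (hG : IsBrouwer G) {V : Set E} (hVo : IsOpen V) (hV : IsPreconnected V)
    (hfree : MapsTo G V Vᶜ) (h1 : 1 ≤ k) (hk : k < n) : MapsTo G^[k] V Vᶜ := by
  induction k using Nat.strong_induction_on with
  | _ k ih =>
    intro p hp hpk
    obtain ⟨φ, hφ, hφV, hφp⟩ := exists_homeomorph_eqOn_compl_of_isPreconnected hVo hV hpk hp
    obtain ⟨k, rfl⟩ := Nat.exists_eq_add_of_le' h1
    refine hn (k + 1) h1 hk (φ * G) (hG.mul hfree hφ hφV) p ?_
    exact (iterate_succ_comp_apply hφV fun j h1 hjk => ih j (by lia) h1 (by lia) hp).trans hφp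

theorem mapsTo_iterate_compl_of_isCompact (hn : ∀ k, 1 ≤ k → k < n → NoPeriodicPt E k)
    (hG : IsBrouwer G) {K : Set E} (hKc : IsCompact K) (hK : IsPreconnected K)
    (hfree : MapsTo G K Kᶜ) (h1 : 1 ≤ k) (hk : k < n) : MapsTo G^[k] K Kᶜ := by
  obtain ⟨ε, hεfree, hε⟩ := ((eventually_mapsTo_thickening_compl G.continuous hKc hKc.isClosed
    hfree).and self_mem_nhdsWithin).exists
  have hsub : K ⊆ thickening ε K := self_subset_thickening hε K
  exact (mapsTo_iterate_compl_of_isOpen hn hG isOpen_thickening (isPreconnected_thickening hK ε)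
    hεfree h1 hk).mono hsub (compl_subset_compl.2 hsub)

-- After following `G` by a homeomorphism supported in `V` that sends `x` to `G y`, the set `G '' W`
-- is still disjoint from its image, but the orbit of `G x` returns to it at `G y`.
theorem iterate_ne_self_of_mapsTo_compl (hn : ∀ k, 1 ≤ k → k < n → NoPeriodicPt E k)
    (hG : IsBrouwer G) (h2 : 2 ≤ n) {V W : Set E} (hVo : IsOpen V) (hV : IsPreconnected V)
    (hWo : IsOpen W) (hW : IsPreconnected W) (hGV : MapsTo G V Vᶜ) (hGW : MapsTo G W Wᶜ)
    (hGWV : MapsTo G^[2] W Vᶜ) {x y : E} (hxV : x ∈ V) (hyV : G y ∈ V) (hxW : x ∈ W)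
    (hyW : y ∈ W) : G^[n] x ≠ x := by
  intro hx
  obtain ⟨φ, hφ, hφV, hφx⟩ := exists_homeomorph_eqOn_compl_of_isPreconnected hVo hV hxV hyV
  have hfree : MapsTo (φ * G) (G '' W) (G '' W)ᶜ := by
    rintro _ ⟨p, hp, rfl⟩ ⟨q, hq, hqp⟩
    have hGp : (φ * G) (G p) = G (G p) := hφV (hGWV hp)
    exact hGW hp (G.injective (hqp.trans hGp) ▸ hq)
  obtain ⟨m, rfl⟩ := Nat.exists_eq_add_of_le' h2
  have hreturn : (φ * G)^[m + 1] (G x) = G y := by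
    have havoid (j : ℕ) (hj : j ≤ m) : G^[j] (G x) ∉ V :=
      mapsTo_iterate_compl_of_isOpen hn hG hVo hV hGV (k := j + 1) (by lia) (by lia) hxV
    exact ((iterate_succ_comp_apply hφV fun j _ => havoid j).trans (congrArg φ hx)).trans hφx
  refine mapsTo_iterate_compl_of_isOpen hn (hG.mul hGV hφ hφV) (G.isOpenMap W hWo)
    (hW.image G G.continuous.continuousOn) hfree (k := m + 1) (by lia) (by lia)
    (mem_image_of_mem G hxW) ?_
  rw [hreturn]
  exact mem_image_of_mem G hyW

end FreeSets

section CriticalSets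

open Set Metric

theorem mapsTo_insert_compl {X : Type*} [TopologicalSpace X] {G : X ≃ₜ X} {U : Set X}
    (hU : IsOpen U) (hfree : MapsTo G U Uᶜ) {a : X} (ha : a ∈ closure U) (hne : G a ≠ a) :
    MapsTo G (insert a U) (insert a U)ᶜ := by
  have hclosure : MapsTo G (closure U) Uᶜ := by
    simpa only [hU.isClosed_compl.closure_eq] using hfree.closure G.continuous
  have hcompl_closure : Disjoint (G '' U) (closure U) :=
    (disjoint_compl_left.mono_left hfree.image_subset).closure_right (G.isOpenMap U hU)
  rintro p (rfl | hp) (hGp | hGp)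
  · exact hne hGp
  · exact hclosure ha hGp
  · exact disjoint_left.1 hcompl_closure (mem_image_of_mem G hp) (hGp ▸ ha)
  · exact hfree hp hGp

theorem segment_subset_insert {E : Type*} [AddCommGroup E] [Module ℝ E]
    [TopologicalSpace E] [IsTopologicalAddGroup E] [ContinuousSMul ℝ E] {U : Set E}
    (hUo : IsOpen U) (hUc : Convex ℝ U) {x a : E} (hx : x ∈ U) (ha : a ∈ closure U) :
    segment ℝ x a ⊆ insert a U := by
  rw [← insert_endpoints_openSegment, insert_subset_iff, insert_subset_iff]
  refine ⟨Or.inr hx, Or.inl rfl, fun p hp => Or.inr ?_⟩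
  simpa only [hUo.interior_eq] using
    hUc.openSegment_interior_closure_subset_interior (hUo.interior_eq.symm ▸ hx) ha hp

variable {E : Type*} [NormedAddCommGroup E] [NormedSpace ℝ E]

-- The largest ball around `x` disjoint from its image.
theorem exists_isOpen_convex_mapsTo_compl [ProperSpace E] {G : E → E} (hG : Continuous G)
    (hfix : ∀ z, G z ≠ z) (x : E) :
    ∃ U : Set E, IsOpen U ∧ Convex ℝ U ∧ x ∈ U ∧ MapsTo G U Uᶜ ∧
      ∃ y ∈ closure U, G y ∈ closure U := by
  obtain ⟨y, hy⟩ := (show Continuous fun p => max (dist p x) (dist (G p) x) by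
    fun_prop).exists_forall_le
    (tendsto_atTop_mono (fun p => le_max_left _ _) (tendsto_dist_right_cocompact_atTop x))
  have hr : 0 < max (dist y x) (dist (G y) x) := by
    contrapose! hfix
    have hyx := dist_le_zero.1 ((le_max_left _ _).trans hfix)
    have hGyx := dist_le_zero.1 ((le_max_right _ _).trans hfix)
    exact ⟨y, hGyx.trans hyx.symm⟩
  refine ⟨ball x _, isOpen_ball, convex_ball x _, mem_ball_self hr, fun p hp hGp => ?_, y, ?_⟩
  · exact (max_lt (mem_ball.1 hp) (mem_ball.1 hGp)).not_ge (hy p)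
  · rw [closure_ball x hr.ne']
    exact ⟨le_max_left (dist y x) (dist (G y) x), le_max_right (dist y x) (dist (G y) x)⟩

variable [CompleteSpace E] {n k : ℕ} {G : E ≃ₜ E} {U : Set E} {x a b : E}

theorem mapsTo_iterate_segment_union_segment_compl
    (hn : ∀ k, 1 ≤ k → k < n → NoPeriodicPt E k) (hG : IsBrouwer G) (hUo : IsOpen U)
    (hUc : Convex ℝ U) (hfree : MapsTo G U Uᶜ) (hx : x ∈ U) (ha : a ∈ closure U) (hb : b ∈ U)
    (h1 : 1 ≤ k) (hk : k < n) :
    MapsTo G^[k] (segment ℝ x a ∪ segment ℝ x b) (segment ℝ x a ∪ segment ℝ x b)ᶜ := by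
  have hsub : segment ℝ x a ∪ segment ℝ x b ⊆ insert a U :=
    union_subset (segment_subset_insert hUo hUc hx ha)
      ((hUc.segment_subset hx hb).trans (subset_insert a U))
  exact mapsTo_iterate_compl_of_isCompact hn hG
    ((isCompact_segment x a).union (isCompact_segment x b))
    ((convex_segment x a).isPreconnected.union x (left_mem_segment ℝ x a) (left_mem_segment ℝ x b)
      (convex_segment x b).isPreconnected)
    ((mapsTo_insert_compl hUo hfree ha (hG.apply_ne_self a)).mono hsub
      (compl_subset_compl.2 hsub)) h1 hk

theorem mapsTo_iterate_segment_segment_compl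
    (hn : ∀ k, 1 ≤ k → k < n → NoPeriodicPt E k) (hG : IsBrouwer G) (hUo : IsOpen U)
    (hUc : Convex ℝ U) (hfree : MapsTo G U Uᶜ) (hx : x ∈ U) (ha : a ∈ closure U)
    (hb : b ∈ closure U) (h1 : 1 ≤ k) (hk : k < n) (hab : G^[k] a ≠ b) :
    MapsTo G^[k] (segment ℝ x a) (segment ℝ x b)ᶜ := by
  intro p hp hGp
  rcases segment_subset_insert hUo hUc hx ha hp with rfl | hpU
  · rcases segment_subset_insert hUo hUc hx hb hGp with hpb | hGpU
    · exact hab hpb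
    · exact mapsTo_iterate_segment_union_segment_compl hn hG hUo hUc hfree hx ha hGpU h1 hk
        (Or.inl hp) (Or.inr (right_mem_segment ℝ x _))
  · exact mapsTo_iterate_segment_union_segment_compl hn hG hUo hUc hfree hx hb hpU h1 hk
      (Or.inr (right_mem_segment ℝ x p)) (Or.inl hGp)

end CriticalSets

section Brouwer

open Set Metric

theorem noPeriodicPt_of_forall_lt {E : Type*} [NormedAddCommGroup E] [NormedSpace ℝ E]
    [ProperSpace E] {n : ℕ} (h3 : 3 ≤ n) (hn : ∀ k, 1 ≤ k → k < n → NoPeriodicPt E k) :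
    NoPeriodicPt E n := by
  intro G hG x
  obtain ⟨U, hUo, hUc, hxU, hfree, y, hy, hGy⟩ :=
    exists_isOpen_convex_mapsTo_compl G.continuous hG.apply_ne_self x
  have hsegment {a : E} (ha : a ∈ closure U) : MapsTo G (segment ℝ x a) (segment ℝ x a)ᶜ :=
    (mapsTo_insert_compl hUo hfree ha (hG.apply_ne_self a)).mono
      (segment_subset_insert hUo hUc hxU ha)
      (compl_subset_compl.2 (segment_subset_insert hUo hUc hxU ha))
  have htwo : MapsTo G^[2] (segment ℝ x y) (segment ℝ x (G y))ᶜ :=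
    mapsTo_iterate_segment_segment_compl hn hG hUo hUc hfree hxU hy hGy one_le_two (by lia)
      (hG.apply_ne_self (G y))
  have hcpt (a : E) : IsCompact (segment ℝ x a) := isCompact_segment x a
  have hsegment_thickening {a : E} (ha : a ∈ closure U) :=
    eventually_mapsTo_thickening_compl G.continuous (hcpt a) (hcpt a).isClosed (hsegment ha)
  have htwo_thickening := eventually_mapsTo_thickening_compl (G.continuous.iterate 2) (hcpt y)
    (hcpt (G y)).isClosed htwo
  obtain ⟨ε, hGV, hGW, hGWV, hε⟩ := ((hsegment_thickening hGy).and <|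
    (hsegment_thickening hy).and <| htwo_thickening.and self_mem_nhdsWithin).exists
  have hsub (a : E) : segment ℝ x a ⊆ thickening ε (segment ℝ x a) :=
    self_subset_thickening hε _
  have hconn (a : E) : IsPreconnected (thickening ε (segment ℝ x a)) :=
    isPreconnected_thickening (convex_segment x a).isPreconnected ε
  exact iterate_ne_self_of_mapsTo_compl hn hG (by lia) isOpen_thickening (hconn (G y))
    isOpen_thickening (hconn y) hGV hGW hGWV (hsub _ (left_mem_segment ℝ x _))
    (hsub _ (right_mem_segment ℝ x _)) (hsub _ (left_mem_segment ℝ x _))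
    (hsub _ (right_mem_segment ℝ x _))

theorem noPeriodicPt_complex {n : ℕ} (h1 : 1 ≤ n) : NoPeriodicPt ℂ n := by
  induction n using Nat.strong_induction_on with
  | _ n ih =>
    rcases lt_or_ge n 3 with h | h
    · rintro G ⟨⟨c, hc⟩, hfix⟩ x
      interval_cases n
      · exact hfix x
      · exact apply_apply_ne_self_of_forall_ne G.continuous G.injective hc hfix x
    · exact noPeriodicPt_of_forall_lt h fun k hk hkn =>
        ih k hkn hk

theorem exists_apply_eq_self_of_isBounded_range_iterate_complex {G : ℂ ≃ₜ ℂ}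
    (hG : G ∈ bddDisplacement ℂ) {x : ℂ}
    (hx : Bornology.IsBounded (range fun n : ℕ => G^[n] x)) : ∃ z, G z = z := by
  by_contra! hfix
  obtain ⟨a, -, ψ, hψ, hlim⟩ := tendsto_subseq_of_bounded hx mem_range_self
  obtain ⟨ε, hfree, hε⟩ := ((eventually_mapsTo_thickening_compl G.continuous
    (isCompact_singleton (x := a)) isClosed_singleton
    (mapsTo_singleton.2 (hfix a))).and self_mem_nhdsWithin).exists
  rw [thickening_singleton] at hfree
  obtain ⟨N, hN⟩ := eventually_atTop.1 (hlim.eventually (ball_mem_nhds a hε))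
  obtain ⟨k, hk⟩ := Nat.exists_eq_add_of_lt (hψ N.lt_add_one)
  refine mapsTo_iterate_compl_of_isOpen (n := k + 2) (k := k + 1)
    (fun _ hj _ => noPeriodicPt_complex hj) ⟨hG, hfix⟩ isOpen_ball
    (convex_ball a ε).isPreconnected hfree (by lia) (by lia) (hN N le_rfl) ?_
  have hreturn := hN (N + 1) N.le_succ
  rwa [Function.comp_apply, hk, add_assoc, add_comm (ψ N), Function.iterate_add_apply] at hreturn

variable {E : Type*} [NormedAddCommGroup E] [NormedSpace ℝ E]

theorem exists_apply_eq_self_of_isBounded_range_iterate (hE : Module.finrank ℝ E = 2)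
    {G : E ≃ₜ E} (hG : G ∈ bddDisplacement E) {x : E}
    (hx : Bornology.IsBounded (range fun n : ℕ => G^[n] x)) : ∃ z, G z = z := by
  have : FiniteDimensional ℝ E := .of_finrank_pos (by lia)
  let e : ℂ ≃L[ℝ] E := .ofFinrankEq (by rw [hE, Complex.finrank_real_complex])
  let H : ℂ ≃ₜ ℂ := (e.toHomeomorph.trans G).trans e.symm.toHomeomorph
  have hH (z : ℂ) : H z = e.symm (G (e z)) := rfl
  have hHb : H ∈ bddDisplacement ℂ := by
    obtain ⟨c, hc⟩ := hG
    refine ⟨‖(e.symm : E →L[ℝ] ℂ)‖ * c, fun z => ?_⟩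
    calc dist (H z) z = dist (e.symm (G (e z))) (e.symm (e z)) := by
          rw [hH, e.symm_apply_apply]
      _ ≤ ‖(e.symm : E →L[ℝ] ℂ)‖ * dist (G (e z)) (e z) :=
          (e.symm : E →L[ℝ] ℂ).lipschitz.dist_le_mul _ _
      _ ≤ ‖(e.symm : E →L[ℝ] ℂ)‖ * c := by gcongr; exact hc (e z)
  have hsemi : Function.Semiconj e.symm G H := fun z => by rw [hH, e.apply_symm_apply]
  have hbdd : Bornology.IsBounded (range fun n : ℕ => H^[n] (e.symm x)) := by
    have hiter (n : ℕ) : H^[n] (e.symm x) = e.symm (G^[n] x) := ((hsemi.iterate_right n) x).symm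
    simp only [hiter]
    exact range_comp e.symm _ ▸ (e.symm : E →L[ℝ] ℂ).lipschitz.isBounded_image hx
  obtain ⟨z, hz⟩ := exists_apply_eq_self_of_isBounded_range_iterate_complex hHb hbdd
  exact ⟨e z, by rw [← e.symm.injective.eq_iff, ← hH, hz, e.symm_apply_apply]⟩

end Brouwer

section Torus

open Set Metric

theorem iterZ_natCast {X : Type*} [TopologicalSpace X] (F : X ≃ₜ X) (n : ℕ) :
    iterZ F n = F^[n] := by
  rw [iterZ, zpow_natCast, Equiv.Perm.coe_pow, Homeomorph.coe_toEquiv]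

variable {d : ℕ}

theorem projT_surjective : Function.Surjective (projT (d := d)) := by
  intro x
  choose z hz using fun i => QuotientAddGroup.mk_surjective (x i)
  exact ⟨WithLp.toLp 2 z, funext hz⟩

theorem projT_eq_iff_exists_eq_add_intVec {z w : Rd d} :
    projT w = projT z ↔ ∃ m : Fin d → ℤ, w = z + intVec m := by
  have hcoord (i : Fin d) :
      (w i : AddCircle (1 : ℝ)) = z i ↔ ∃ n : ℤ, w i = z i + n := by
    rw [← sub_eq_zero, ← AddCircle.coe_sub, AddCircle.coe_eq_zero_iff]
    simp only [zsmul_eq_mul, mul_one, eq_sub_iff_add_eq', eq_comm]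
  simp only [projT, funext_iff, hcoord, Classical.skolem, PiLp.ext_iff, intVec, PiLp.add_apply]

theorem forall_exists_rat_iff_exists_smul_eq_intVec (ρ : Rd d) :
    (∀ i, ∃ r : ℚ, ρ i = r) ↔ ∃ q : ℕ, 1 ≤ q ∧ ∃ m : Fin d → ℤ, (q : ℝ) • ρ = intVec m := by
  have hcoord (q : ℕ) :
      (∃ m : Fin d → ℤ, (q : ℝ) • ρ = intVec m) ↔ ∀ i, ∃ n : ℤ, q * ρ i = n := by
    simp only [Classical.skolem, PiLp.ext_iff, intVec, PiLp.smul_apply, smul_eq_mul]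
  simp only [hcoord]
  constructor
  · intro h
    choose r hr using h
    refine ⟨∏ i, (r i).den, Finset.one_le_prod' fun i _ => (r i).den_pos, fun i => ?_⟩
    obtain ⟨k, hk⟩ := Finset.dvd_prod_of_mem (fun i => (r i).den) (Finset.mem_univ i)
    have hden : (r i : ℝ) * (r i).den = (r i).num := mod_cast (r i).mul_den_eq_num
    refine ⟨k * (r i).num, ?_⟩
    rw [hk, hr i]
    push_cast
    linear_combination (k : ℝ) * hden
  · rintro ⟨q, hq, h⟩ i
    obtain ⟨n, hn⟩ := h i
    refine ⟨n / q, ?_⟩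
    push_cast
    rw [← hn, mul_div_cancel_left₀ _ (by positivity)]

variable {f : Torus d ≃ₜ Torus d} {F : Rd d ≃ₜ Rd d} {ρ : Rd d} {K : Set (Torus d)}

theorem BddMeanMotionOn.exists_norm_iterate_sub_le (h : BddMeanMotionOn F ρ K) :
    ∃ c : ℝ, ∀ (n : ℕ) (z : Rd d), projT z ∈ K → ‖F^[n] z - z - (n : ℝ) • ρ‖ ≤ c := by
  obtain ⟨c, -, hc⟩ := h
  exact ⟨c, fun n z hz => by simpa [iterZ_natCast] using hc n z hz⟩

theorem IsLift.projT_iterate (hF : IsLift f F) (n : ℕ) (z : Rd d) :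
    projT (F^[n] z) = f^[n] (projT z) :=
  Function.Semiconj.iterate_right (f := projT) hF.1 n z

theorem IsLift.iterate_sub_intVec (hF : IsLift f F) (q n : ℕ) (m : Fin d → ℤ) (z : Rd d) :
    (fun w => F^[q] w - intVec m)^[n] z = F^[q * n] z - (n : ℝ) • intVec m := by
  have hcomm : Function.Commute (fun w => w - intVec m) F^[q] :=
    Function.Commute.iterate_right (fun w => by
      rw [eq_comm, eq_sub_iff_add_eq, ← hF.2, sub_add_cancel]) q
  have htrans : (fun w : Rd d => w - intVec m)^[n] = fun w => w - (n : ℝ) • intVec m := by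
    simp only [sub_eq_add_neg, add_right_iterate, smul_neg, Nat.cast_smul_eq_nsmul]
  change ((fun w => w - intVec m) ∘ F^[q])^[n] z = _
  rw [hcomm.comp_iterate, htrans, Function.comp_apply, Function.iterate_mul]

theorem IsLift.smul_eq_intVec (hF : IsLift f F) (hbmm : BddMeanMotionOn F ρ K) {q : ℕ} {z : Rd d}
    (hz : projT z ∈ K) {m : Fin d → ℤ} (h : F^[q] z = z + intVec m) :
    (q : ℝ) • ρ = intVec m := by
  obtain ⟨c, hc⟩ := hbmm.exists_norm_iterate_sub_le
  have hmul (n : ℕ) : n • ‖intVec m - (q : ℝ) • ρ‖ ≤ c := by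
    have hfixed : (fun w => F^[q] w - intVec m)^[n] z = z :=
      Function.iterate_fixed (by rw [h, add_sub_cancel_right]) n
    rw [hF.iterate_sub_intVec, sub_eq_iff_eq_add'] at hfixed
    calc n • ‖intVec m - (q : ℝ) • ρ‖ = ‖(n : ℝ) • (intVec m - (q : ℝ) • ρ)‖ := by
          rw [norm_smul, Real.norm_natCast, nsmul_eq_mul]
      _ = ‖F^[q * n] z - z - ((q * n : ℕ) : ℝ) • ρ‖ := by
          rw [hfixed]
          congr 1
          push_cast
          module
      _ ≤ c := hc _ z hz
  by_contra! hne
  obtain ⟨n, hn⟩ := exists_lt_nsmul (norm_pos_iff.2 (sub_ne_zero.2 hne.symm)) c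
  exact hn.not_ge (hmul n)

theorem IsLift.exists_iterate_eq_add_intVec {f : Torus 2 ≃ₜ Torus 2} {F : Rd 2 ≃ₜ Rd 2}
    (hF : IsLift f F) {ρ : Rd 2} (hbmm : BddMeanMotionOn F ρ univ) {q : ℕ} {m : Fin 2 → ℤ}
    (hρ : (q : ℝ) • ρ = intVec m) : ∃ z, F^[q] z = z + intVec m := by
  obtain ⟨c, hc⟩ := hbmm.exists_norm_iterate_sub_le
  let G : Rd 2 ≃ₜ Rd 2 := (F ^ q).trans (Homeomorph.subRight (intVec m))
  have hG : ⇑G = fun z => F^[q] z - intVec m := by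
    have hpow : ⇑(F ^ q) = F^[q] :=
      hom_coe_pow (fun H : Rd 2 ≃ₜ Rd 2 => ⇑H) rfl (fun _ _ => rfl) F q
    exact funext fun z => congrArg (· - intVec m) (congrFun hpow z)
  have hdist (n : ℕ) (z : Rd 2) : dist (G^[n] z) z ≤ c := by
    calc dist (G^[n] z) z = ‖F^[q * n] z - z - ((q * n : ℕ) : ℝ) • ρ‖ := by
          rw [hG, hF.iterate_sub_intVec, ← hρ, dist_eq_norm]
          congr 1
          push_cast
          module
      _ ≤ c := hc _ z (mem_univ _)
  obtain ⟨z, hz⟩ := exists_apply_eq_self_of_isBounded_range_iterate (by simp) (x := 0)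
    ⟨c, hdist 1⟩ (isBounded_closedBall.subset (range_subset_iff.2 fun n => hdist n 0))
  exact ⟨z, by rw [← sub_eq_iff_eq_add, ← congrFun hG z, hz]⟩

theorem statement6_general {f : Torus 2 ≃ₜ Torus 2} {F : Rd 2 ≃ₜ Rd 2} (hF : IsLift f F)
    {ρ : Rd 2} (hbmm : BddMeanMotionOn F ρ univ) :
    (∀ i, ∃ q : ℚ, ρ i = (q : ℝ)) ↔ ∃ (x : Torus 2) (q : ℕ), 1 ≤ q ∧ (⇑f)^[q] x = x := by
  rw [forall_exists_rat_iff_exists_smul_eq_intVec]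
  constructor
  · rintro ⟨q, hq, m, hm⟩
    obtain ⟨z, hz⟩ := hF.exists_iterate_eq_add_intVec hbmm hm
    refine ⟨projT z, q, hq, ?_⟩
    rw [← hF.projT_iterate]
    exact projT_eq_iff_exists_eq_add_intVec.2 ⟨m, hz⟩
  · rintro ⟨x, q, hq, hx⟩
    obtain ⟨z, rfl⟩ := projT_surjective x
    rw [← hF.projT_iterate] at hx
    obtain ⟨m, hm⟩ := projT_eq_iff_exists_eq_add_intVec.1 hx
    exact ⟨q, hq, m, hF.smul_eq_intVec hbmm (mem_univ _) hm⟩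

end Torus

/-- **Theorem C (iii).**  For a conservative pseudo-rotation `f ∈ Homeo₀(𝕋²)` with
rotation vector `ρ` and bounded mean motion, `ρ` is rational if and only if `f` has a
periodic point. -/
theorem statement6 (f : Torus 2 ≃ₜ Torus 2) (F : Rd 2 ≃ₜ Rd 2) (hF : IsLift f F)
    (hcons : Conservative f) (ρ : Rd 2)
    (hpr : IsPseudoRotationOn F ρ Set.univ) (hbmm : BddMeanMotionOn F ρ Set.univ) :
    (∀ i, ∃ q : ℚ, ρ i = (q : ℝ)) ↔
      ∃ (x : Torus 2) (q : ℕ), 1 ≤ q ∧ (⇑f)^[q] x = x :=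
  statement6_general hF hbmm
end
end

section
/- Let v ∈ ℤ^d with gcd(v₁, …, v_d) = 1, and let w², …, w^d ∈ ℤ^d be vectors orthogonal to v such that there exists w¹ ∈ ℤ^d with det(w¹, w², …, w^d) = 1 (where det denotes the determinant of the d×d matrix with the given columns). Then |det(v, w², …, w^d)| = ‖v‖², where ‖v‖ is the Euclidean norm. -/
open Filter Topology

local notation "⟪" x ", " y "⟫" => @inner ℝ _ _ x y

noncomputable section

/-!
Let `W` be the matrix with columns `w¹, …, w^d` and put `c = ⟨w¹, v⟩`. Orthogonality says that the
row vector `v W` is `c e₁`; multiplying on the right by the adjugate of `W` gives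
`det W • v = c • u`, where `u` is the first row of the adjugate. When `det W` is a unit, `c` divides
every coordinate of the primitive vector `v`, hence is a unit. By Cramer's rule
`⟨u, v⟩ = det(v, w², …, w^d)`, so `c * det(v, w², …, w^d) = det W * ⟨v, v⟩`: the determinant and
`⟨v, v⟩` differ by a unit, which over `ℤ` is a sign.
-/

/-- Primitivity of a vector: its coordinates have no common divisors but units. It replaces
coprimality of the coordinates over rings where greatest common divisors need not exist. -/
def IsPrimitiveVector {ι M : Type*} [Monoid M] (v : ι → M) : Prop :=
  ∀ r, (∀ j, r ∣ v j) → IsUnit r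

theorem isPrimitiveVector_of_gcd_eq_one {ι α : Type*} [Fintype ι] [CommMonoidWithZero α]
    [NormalizedGCDMonoid α] {v : ι → α} (h : Finset.univ.gcd v = 1) : IsPrimitiveVector v :=
  fun _ hr => isUnit_of_dvd_one (h ▸ Finset.dvd_gcd fun j _ => hr j)

section CommRing

open scoped Matrix

variable {n R : Type*} [Fintype n] [DecidableEq n] [CommRing R]
  {A : Matrix n n R} {v : n → R} {k : n}

theorem det_smul_eq_vecMul_smul_adjugate_row (h : ∀ i, i ≠ k → (v ᵥ* A) i = 0) :
    A.det • v = (v ᵥ* A) k • A.adjugate.row k := by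
  have hsingle : v ᵥ* A = Pi.single k ((v ᵥ* A) k) := by
    ext i
    rcases eq_or_ne i k with rfl | hi
    · rw [Pi.single_eq_same]
    · rw [h i hi, Pi.single_eq_of_ne hi]
  calc
    A.det • v = v ᵥ* A ᵥ* A.adjugate := by
      rw [Matrix.vecMul_vecMul, Matrix.mul_adjugate, Matrix.vecMul_smul, Matrix.vecMul_one]
    _ = (v ᵥ* A) k • A.adjugate.row k := by
      rw [hsingle, Matrix.single_vecMul, Pi.single_eq_same]

theorem adjugate_row_dotProduct (A : Matrix n n R) (v : n → R) (k : n) :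
    A.adjugate.row k ⬝ᵥ v = (A.updateCol k v).det := by
  rw [← Matrix.cramer_apply, Matrix.cramer_eq_adjugate_mulVec]
  rfl

theorem vecMul_mul_det_updateCol_eq (h : ∀ i, i ≠ k → (v ᵥ* A) i = 0) :
    (v ᵥ* A) k * (A.updateCol k v).det = A.det * (v ⬝ᵥ v) := by
  rw [← adjugate_row_dotProduct, ← smul_eq_mul, ← smul_dotProduct,
    ← det_smul_eq_vecMul_smul_adjugate_row h, smul_dotProduct, smul_eq_mul]

theorem IsPrimitiveVector.isUnit_vecMul (hv : IsPrimitiveVector v)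
    (h : ∀ i, i ≠ k → (v ᵥ* A) i = 0) (hA : IsUnit A.det) : IsUnit ((v ᵥ* A) k) :=
  hv _ fun j => hA.dvd_mul_left.mp
    ⟨A.adjugate k j, congrFun (det_smul_eq_vecMul_smul_adjugate_row h) j⟩

theorem statement18_general (hv : IsPrimitiveVector v) (h : ∀ i, i ≠ k → (v ᵥ* A) i = 0)
    (hA : IsUnit A.det) : Associated (A.updateCol k v).det (v ⬝ᵥ v) := by
  have hprod : Associated ((v ᵥ* A) k * (A.updateCol k v).det) (A.det * (v ⬝ᵥ v)) :=
    .of_eq (vecMul_mul_det_updateCol_eq h)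
  rwa [associated_isUnit_mul_left_iff (hv.isUnit_vecMul h hA),
    associated_isUnit_mul_right_iff hA] at hprod

end CommRing

theorem norm_intVec_sq {d : ℕ} (m : Fin d → ℤ) : ‖intVec m‖ ^ 2 = ((m ⬝ᵥ m : ℤ) : ℝ) := by
  rw [EuclideanSpace.real_norm_sq_eq]
  simp [intVec, dotProduct, sq]

theorem abs_cast_eq_norm_intVec_sq_of_associated {d : ℕ} {a : ℤ} {m : Fin d → ℤ}
    (h : Associated a (m ⬝ᵥ m)) : |(a : ℝ)| = ‖intVec m‖ ^ 2 := by
  have habs : |a| = |m ⬝ᵥ m| := abs_eq_abs.mpr (Int.associated_iff.mp h)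
  rw [← abs_sq ‖intVec m‖, norm_intVec_sq]
  exact_mod_cast habs

theorem of_ite_eq_updateCol {m n α : Type*} [DecidableEq n] (A : m → n → α) (b : m → α) (k : n) :
    (Matrix.of fun j i => if i = k then b j else A j i) = (Matrix.of A).updateCol k b := by
  ext j i
  rw [Matrix.of_apply, Matrix.updateCol_apply, Matrix.of_apply]

/-- If `v ∈ ℤ^d` has coprime coordinates and `w², …, w^d ∈ ℤ^d` are orthogonal to `v`
such that `det(w¹, w², …, w^d) = 1` for some `w¹ ∈ ℤ^d`, then
`|det(v, w², …, w^d)| = ‖v‖²`.  Here `w 0 = w¹` and `w i = wⁱ⁺¹`; columns of the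
matrices are the given vectors. -/
theorem statement18 {d : ℕ} [NeZero d] (v : Fin d → ℤ) (hgcd : Finset.univ.gcd v = 1)
    (w : Fin d → Fin d → ℤ)
    (horth : ∀ i : Fin d, i ≠ 0 → ∑ j, w i j * v j = 0)
    (hdet : (Matrix.of fun j i : Fin d => w i j).det = 1) :
    |(((Matrix.of fun j i : Fin d => if i = 0 then v j else w i j).det : ℤ) : ℝ)| =
      ‖intVec v‖ ^ 2 := by
  rw [of_ite_eq_updateCol fun j i => w i j]
  exact abs_cast_eq_norm_intVec_sq_of_associated <|
    statement18_general (isPrimitiveVector_of_gcd_eq_one hgcd)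
      (fun i hi => (dotProduct_comm _ _).trans (horth i hi)) (hdet ▸ isUnit_one)
end
end
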